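/- arXiv:1808.00417 — 2 statements merged into one kernel-verified Lean document; each statement's English description precedes it below -/
import Mathlib

section
/- Let Q be a ground program and A a set of atoms such that for every a ∈ A: (1) Q contains the choice rule a ∨ a_F ← (head {a, a_F}, empty body) for some atom a_F that occurs in no other rule of Q, and (2) this choice rule is the only rule of Q whose head contains a. Let R ⊆ {a ← : a ∈ A} and R₁ be sets of facts with R ⊆ R₁ ⊆ {a ← : a ∈ A}. If Q ∪ R is incoherent, then Q ∪ R₁ is incoherent. -/
/-- A ground disjunctive ASP rule: head atoms, positive body atoms, negative body atoms. -/
structure Rule (α : Type*) where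
  head : Finset α
  pos : Finset α
  neg : Finset α

/-- An interpretation `I` satisfies a rule `r`. -/
def satRule {α : Type*} (I : Set α) (r : Rule α) : Prop :=
  ((∀ b ∈ r.pos, b ∈ I) ∧ (∀ b ∈ r.neg, b ∉ I)) → ∃ a ∈ r.head, a ∈ I

/-- An interpretation `I` satisfies a program. -/
def satProg {α : Type*} (I : Set α) (Prg : Set (Rule α)) : Prop :=
  ∀ r ∈ Prg, satRule I r

/-- The reduct of a program with respect to an interpretation `I`. -/
def reduct {α : Type*} (Prg : Set (Rule α)) (I : Set α) : Set (Rule α) :=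
  {r' | ∃ r ∈ Prg, (∀ b ∈ r.neg, b ∉ I) ∧ r' = ⟨r.head, r.pos, ∅⟩}

/-- `I` is an answer set of `Prg`. -/
def isAnswerSet {α : Type*} (Prg : Set (Rule α)) (I : Set α) : Prop :=
  satProg I Prg ∧ ∀ J ⊂ I, ¬ satProg J (reduct Prg I)

/-- The set of answer sets of a program. -/
def AS {α : Type*} (Prg : Set (Rule α)) : Set (Set α) := {I | isAnswerSet Prg I}

/-- A program is coherent if it has at least one answer set. -/
def coherent {α : Type*} (Prg : Set (Rule α)) : Prop := (AS Prg).Nonempty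

/-- The fact `a ←`. -/
def fact {α : Type*} (a : α) : Rule α := ⟨{a}, ∅, ∅⟩

/-- Atom `a` occurs in rule `r`. -/
def occursIn {α : Type*} (a : α) (r : Rule α) : Prop :=
  a ∈ r.head ∨ a ∈ r.pos ∨ a ∈ r.neg

/-- The atoms occurring in a program. -/
def progAtoms {α : Type*} (Prg : Set (Rule α)) : Set α := {a | ∃ r ∈ Prg, occursIn a r}

/-- The constraint `← not a`. -/
def constraintNot {α : Type*} (a : α) : Rule α := ⟨∅, ∅, {a}⟩

/-- `P_T`: the constraints `← not a` for `a ∈ T`. -/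
def PT {α : Type*} (T : Set α) : Set (Rule α) := constraintNot '' T

/-- `P_A`: the facts `a ←` for `a ∈ A`. -/
def PA {α : Type*} (A : Set α) : Set (Rule α) := fact '' A

/-! Let `I` be an answer set of `Q ∪ R₁`, and let `J ⊆ I` be a minimal model of the reduct of
`Q ∪ R` with respect to `I`. If `a ←` is in `R₁` but `a_F ←` is not, then `a_F ∉ I`, since no
rule supports it; so the choice rule forces `a ∈ J`. If both facts are in `R₁`, then `a` and
`a_F` occur in `Q` only in their common choice rule, so adding them to a model of `Q` preserves
it. Hence adding such atoms to `J` gives a model of the reduct of `Q ∪ R₁`, which is all of `I`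
by minimality. The atoms of `I \ J` therefore occur in no negative body, so `I` and `J` define
the same reduct of `Q ∪ R`, and `J` is an answer set of `Q ∪ R`. -/

section Reduct

variable {α : Type*} {P P' : Set (Rule α)} {I J S : Set α} {r : Rule α} {a : α}

theorem satRule_congr (h : ∀ a, occursIn a r → (a ∈ I ↔ a ∈ J)) : satRule I r ↔ satRule J r := by
  have hpos : (∀ b ∈ r.pos, b ∈ I) ↔ ∀ b ∈ r.pos, b ∈ J :=
    forall₂_congr fun b hb => h b (.inr (.inl hb))
  have hneg : (∀ b ∈ r.neg, b ∉ I) ↔ ∀ b ∈ r.neg, b ∉ J :=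
    forall₂_congr fun b hb => not_congr (h b (.inr (.inr hb)))
  have hhead : (∃ a ∈ r.head, a ∈ I) ↔ ∃ a ∈ r.head, a ∈ J :=
    exists_congr fun a => and_congr_right fun ha => h a (.inl ha)
  rw [satRule, satRule, hpos, hneg, hhead]

theorem satRule_fact : satRule I (fact a) ↔ a ∈ I := by
  simp [satRule, fact]

theorem satProg_union : satProg I (P ∪ P') ↔ satProg I P ∧ satProg I P' := by
  simp only [satProg, Set.mem_union, or_imp, forall_and]

theorem satProg_PA : satProg I (PA S) ↔ S ⊆ I := by
  simp only [satProg, PA, Set.forall_mem_image, satRule_fact, Set.subset_def]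

theorem satProg_union_PA : satProg I (P ∪ PA S) ↔ satProg I P ∧ S ⊆ I := by
  rw [satProg_union, satProg_PA]

theorem neg_eq_empty_of_mem_reduct (hr : r ∈ reduct P I) : r.neg = ∅ := by
  obtain ⟨_, _, _, rfl⟩ := hr
  rfl

theorem mem_reduct_of_neg_eq_empty (hr : r ∈ P) (hneg : r.neg = ∅) : r ∈ reduct P I := by
  refine ⟨r, hr, by simp [hneg], ?_⟩
  rw [← hneg]

theorem reduct_eq_self (hP : ∀ r ∈ P, r.neg = ∅) : reduct P I = P := by
  refine Set.Subset.antisymm ?_ fun r hr => mem_reduct_of_neg_eq_empty hr (hP r hr)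
  rintro _ ⟨r, hr, -, rfl⟩
  rwa [← hP r hr]

theorem reduct_union : reduct (P ∪ P') I = reduct P I ∪ reduct P' I := by
  ext r
  simp only [reduct, Set.mem_union, Set.mem_ofPred_eq, or_and_right, exists_or]

theorem reduct_union_PA : reduct (P ∪ PA S) I = reduct P I ∪ PA S := by
  rw [reduct_union, reduct_eq_self (P := PA S) (by rintro _ ⟨a, -, rfl⟩; rfl)]

theorem reduct_congr (h : ∀ r ∈ P, ∀ b ∈ r.neg, (b ∈ I ↔ b ∈ J)) : reduct P I = reduct P J := by
  ext r'
  refine exists_congr fun r => and_congr_right fun hr => and_congr_left fun _ => ?_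
  exact forall₂_congr fun b hb => not_congr (h r hr b hb)

theorem satProg_reduct_self : satProg I (reduct P I) ↔ satProg I P := by
  constructor
  · rintro h r hr ⟨hpos, hneg⟩
    exact h ⟨r.head, r.pos, ∅⟩ ⟨r, hr, hneg, rfl⟩ ⟨hpos, by simp⟩
  · rintro h _ ⟨r, hr, hneg, rfl⟩ ⟨hpos, -⟩
    exact h r hr ⟨hpos, hneg⟩

theorem isAnswerSet_iff_minimal : isAnswerSet P I ↔ Minimal (satProg · (reduct P I)) I := by
  simp only [isAnswerSet, minimal_iff_forall_lt, satProg_reduct_self]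

end Reduct

section MinimalModels

variable {α : Type*} {P : Set (Rule α)} {I : Set α} {c : α}

-- Finiteness of the heads is what makes models closed under intersections of chains.
theorem satProg_sInter_of_isChain (hP : ∀ r ∈ P, r.neg = ∅) {C : Set (Set α)}
    (hC : IsChain (· ⊆ ·) C) (hne : C.Nonempty) (hsat : ∀ s ∈ C, satProg s P) :
    satProg (⋂₀ C) P := by
  rintro r hr ⟨hpos, -⟩
  by_contra! hhead
  have hcover : (r.head : Set α) ⊆ ⋃ s ∈ C, sᶜ := fun a ha => by
    simpa using hhead a ha
  have hC_superset : IsChain (fun s t => t ⊆ s) C := hC.symm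
  have hdir : DirectedOn (fun s t : Set α => sᶜ ⊆ tᶜ) C := by
    simpa only [Set.compl_subset_compl] using hC_superset.directedOn
  obtain ⟨s, hs, hdisj⟩ := hdir.exists_mem_subset_of_finset_subset_biUnion hne hcover
  obtain ⟨a, ha, has⟩ := hsat s hs r hr ⟨fun b hb => hpos b hb s hs, by simp [hP r hr]⟩
  exact hdisj ha has

theorem exists_subset_minimal_satProg (hP : ∀ r ∈ P, r.neg = ∅) (hI : satProg I P) :
    ∃ J ⊆ I, Minimal (satProg · P) J :=
  zorn_superset_nonempty {J | satProg J P}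
    (fun C hsat hC hne =>
      ⟨⋂₀ C, satProg_sInter_of_isChain hP hC hne hsat, fun _ => Set.sInter_subset_of_mem⟩)
    I hI

theorem isAnswerSet.exists_head_inter_eq_singleton (hI : isAnswerSet P I) (hc : c ∈ I) :
    ∃ r ∈ P, (r.head : Set α) ∩ I = {c} := by
  have hunsat : ¬ satProg (I \ {c}) (reduct P I) := hI.2 _ (Set.sdiff_singleton_ssubset.mpr hc)
  simp only [satProg, not_forall] at hunsat
  obtain ⟨_, ⟨r, hr, hneg, rfl⟩, hunsat⟩ := hunsat
  simp only [satRule, Classical.not_imp, not_exists, not_and] at hunsat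
  obtain ⟨⟨hpos, -⟩, hhead⟩ := hunsat
  have hhead_eq : ∀ a ∈ r.head, a ∈ I → a = c := fun a ha haI => by
    by_contra hac
    exact hhead a ha ⟨haI, hac⟩
  obtain ⟨a, ha, haI⟩ := hI.1 r hr ⟨fun b hb => (hpos b hb).1, hneg⟩
  refine ⟨r, hr, Set.eq_singleton_iff_unique_mem.mpr ⟨?_, fun x hx => hhead_eq x hx.1 hx.2⟩⟩
  exact hhead_eq a ha haI ▸ ⟨ha, haI⟩

end MinimalModels

section ChoiceRules

variable {α : Type*} [DecidableEq α] {Q : Set (Rule α)} {I J S S₁ D : Set α} {r : Rule α}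
  {a b c : α}

/-- The choice rule `a ∨ b ←`. -/
def choiceRule (a b : α) : Rule α := ⟨{a, b}, ∅, ∅⟩

/-- The atom `b` can play the role of `a_F` for `a` in `Q`: the choice rule `a ∨ b ←` belongs to `Q`
and is the only rule of `Q` in which `b` occurs. The case `a = b` is not excluded. -/
def IsChoiceComplement (Q : Set (Rule α)) (a b : α) : Prop :=
  choiceRule a b ∈ Q ∧ ∀ r ∈ Q, r ≠ choiceRule a b → ¬ occursIn b r

/-- The atoms which play the role of `a_F` for some atom `a`. -/
def choiceComplements (Q : Set (Rule α)) : Set α := {b | ∃ a, IsChoiceComplement Q a b}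

theorem satRule_choiceRule : satRule I (choiceRule a b) ↔ a ∈ I ∨ b ∈ I := by
  simp [satRule, choiceRule]

theorem occursIn_choiceRule : occursIn c (choiceRule a b) ↔ c = a ∨ c = b := by
  simp [occursIn, choiceRule]

theorem choiceRule_comm (a b : α) : choiceRule a b = choiceRule b a := by
  simp only [choiceRule, Finset.pair_comm]

namespace IsChoiceComplement

theorem eq_choiceRule (h : IsChoiceComplement Q a b) (hr : r ∈ Q) (hb : occursIn b r) :
    r = choiceRule a b :=
  by_contra fun hne => h.2 r hr hne hb

theorem mem_or_mem (h : IsChoiceComplement Q a b) (hJ : satProg J (reduct Q I)) :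
    a ∈ J ∨ b ∈ J :=
  satRule_choiceRule.mp (hJ _ (mem_reduct_of_neg_eq_empty h.1 rfl))

protected theorem reduct (h : IsChoiceComplement Q a b) : IsChoiceComplement (reduct Q I) a b := by
  refine ⟨mem_reduct_of_neg_eq_empty h.1 rfl, ?_⟩
  rintro _ ⟨r, hr, -, rfl⟩ hne hb
  have hbr : occursIn b r := hb.imp_right fun hb => .inl (hb.resolve_right (by simp))
  exact hne (by rw [h.eq_choiceRule hr hbr]; rfl)

theorem symm_of_isChoiceComplement (hab : IsChoiceComplement Q a b)
    (hbc : IsChoiceComplement Q b c) : IsChoiceComplement Q b a := by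
  have hrule : choiceRule b c = choiceRule a b :=
    hab.eq_choiceRule hbc.1 (occursIn_choiceRule.mpr (.inl rfl))
  have ha : a = b ∨ a = c :=
    occursIn_choiceRule.mp (hrule ▸ occursIn_choiceRule.mpr (.inl rfl))
  obtain rfl | rfl := ha
  · exact hab
  · exact hbc

end IsChoiceComplement

theorem notMem_neg_of_mem_choiceComplements (hb : b ∈ choiceComplements Q) (hr : r ∈ Q) :
    b ∉ r.neg := by
  obtain ⟨a, hab⟩ := hb
  intro hbr
  rw [hab.eq_choiceRule hr (.inr (.inr hbr))] at hbr
  exact Finset.notMem_empty b hbr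

theorem choiceComplements_subset_reduct : choiceComplements Q ⊆ choiceComplements (reduct Q I) :=
  fun _ ⟨a, h⟩ => ⟨a, h.reduct⟩

theorem satProg_union_of_subset_choiceComplements (hJ : satProg J Q)
    (hD : D ⊆ choiceComplements Q) : satProg (J ∪ D) Q := by
  intro r hr
  by_cases hrD : ∃ b ∈ D, occursIn b r
  · obtain ⟨b, hb, hbr⟩ := hrD
    obtain ⟨a, hab⟩ := hD hb
    rw [hab.eq_choiceRule hr hbr, satRule_choiceRule]
    exact .inr (.inr hb)
  · refine (satRule_congr fun b hbr => ?_).mp (hJ r hr)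
    exact ⟨.inl, fun hb => hb.resolve_right fun hbD => hrD ⟨b, hbD, hbr⟩⟩

theorem isAnswerSet.notMem_of_isChoiceComplement (hI : isAnswerSet (Q ∪ PA S) I)
    (hab : IsChoiceComplement Q a b) (ha : a ∈ S) (hb : b ∉ S) : b ∉ I := by
  intro hbI
  obtain ⟨r, hr, hhead⟩ := hI.exists_head_inter_eq_singleton hbI
  obtain ⟨hbr, -⟩ : b ∈ (r.head : Set α) ∩ I := hhead ▸ rfl
  obtain hr | ⟨x, hx, rfl⟩ := hr
  · obtain rfl := hab.eq_choiceRule hr (.inl hbr)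
    have haI : a ∈ I := (satProg_union_PA.mp hI.1).2 ha
    have hab_eq : a ∈ ({b} : Set α) := hhead ▸ ⟨by simp [choiceRule], haI⟩
    exact hb (hab_eq ▸ ha)
  · obtain rfl := Finset.mem_singleton.mp hbr
    exact hb hx

theorem isAnswerSet.subset_union_inter_choiceComplements (hI : isAnswerSet (Q ∪ PA S) I)
    (hQ : ∀ a ∈ S, ∃ b, IsChoiceComplement Q a b) (hJI : J ⊆ I) (hJ : satProg J (reduct Q I)) :
    S ⊆ J ∪ S ∩ choiceComplements Q := by
  intro a ha
  obtain ⟨b, hab⟩ := hQ a ha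
  by_cases hb : b ∈ S
  · obtain ⟨c, hbc⟩ := hQ b hb
    exact .inr ⟨ha, b, hab.symm_of_isChoiceComplement hbc⟩
  · have hbJ : b ∉ J := fun h => hI.notMem_of_isChoiceComplement hab ha hb (hJI h)
    exact .inl ((hab.mem_or_mem hJ).resolve_right hbJ)

theorem isAnswerSet.subset_union_choiceComplements (hI : isAnswerSet (Q ∪ PA S) I)
    (hQ : ∀ a ∈ S, ∃ b, IsChoiceComplement Q a b) (hJI : J ⊆ I) (hJ : satProg J (reduct Q I)) :
    I ⊆ J ∪ choiceComplements Q := by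
  set D := S ∩ choiceComplements Q
  have hSI : S ⊆ I := (satProg_union_PA.mp hI.1).2
  have hsat : satProg (J ∪ D) (reduct (Q ∪ PA S) I) := by
    rw [reduct_union_PA, satProg_union_PA]
    exact ⟨satProg_union_of_subset_choiceComplements hJ
      (Set.inter_subset_right.trans choiceComplements_subset_reduct),
      hI.subset_union_inter_choiceComplements hQ hJI hJ⟩
  have hIJD : I = J ∪ D := (isAnswerSet_iff_minimal.mp hI).eq_of_superset hsat
    (Set.union_subset hJI (Set.inter_subset_left.trans hSI))
  exact hIJD.subset.trans (Set.union_subset_union_right J Set.inter_subset_right)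

theorem coherent_union_PA_of_subset (hQ : ∀ a ∈ S₁, ∃ b, IsChoiceComplement Q a b)
    (hSS₁ : S ⊆ S₁) (hcoh : coherent (Q ∪ PA S₁)) : coherent (Q ∪ PA S) := by
  obtain ⟨I, hI : isAnswerSet (Q ∪ PA S₁) I⟩ := hcoh
  have hIsat : satProg I (reduct (Q ∪ PA S) I) := by
    obtain ⟨hIQ, hS₁I⟩ := satProg_union_PA.mp hI.1
    exact satProg_reduct_self.mpr (satProg_union_PA.mpr ⟨hIQ, hSS₁.trans hS₁I⟩)
  obtain ⟨J, hJI, hJmin⟩ :=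
    exists_subset_minimal_satProg (fun _ => neg_eq_empty_of_mem_reduct) hIsat
  have hJQ : satProg J (reduct Q I) := by
    have hJsat := hJmin.prop
    rw [reduct_union_PA, satProg_union_PA] at hJsat
    exact hJsat.1
  have hreduct : reduct Q I = reduct Q J := reduct_congr fun r hr b hb =>
    ⟨fun hbI => (hI.subset_union_choiceComplements hQ hJI hJQ hbI).resolve_right
      fun hbQ => notMem_neg_of_mem_choiceComplements hbQ hr hb, @hJI b⟩
  refine ⟨J, isAnswerSet_iff_minimal.mpr ?_⟩
  rwa [reduct_union_PA, ← hreduct, ← reduct_union_PA]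

end ChoiceRules

theorem stmt_2_general {α : Type*} [DecidableEq α]
    (Q : Set (Rule α)) (A : Set α)
    (hchoice : ∀ a ∈ A, ∃ aF : α, IsChoiceComplement Q a aF)
    (R R₁ : Set (Rule α)) (hRR₁ : R ⊆ R₁) (hR₁ : R₁ ⊆ fact '' A)
    (hinc : ¬ coherent (Q ∪ R)) :
    ¬ coherent (Q ∪ R₁) := by
  obtain ⟨S₁, hS₁A, rfl⟩ := Set.subset_image_iff.mp hR₁
  obtain ⟨S, hSS₁, rfl⟩ := Set.subset_image_iff.mp hRR₁
  exact mt (coherent_union_PA_of_subset (fun a ha => hchoice a (hS₁A ha)) hSS₁) hinc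

theorem stmt_2 {α : Type*} [DecidableEq α]
    (Q : Set (Rule α)) (A : Set α)
    (hchoice : ∀ a ∈ A, ∃ aF : α,
      (⟨{a, aF}, ∅, ∅⟩ : Rule α) ∈ Q ∧
      (∀ r ∈ Q, r ≠ (⟨{a, aF}, ∅, ∅⟩ : Rule α) → ¬ occursIn aF r) ∧
      (∀ r ∈ Q, a ∈ r.head → r = (⟨{a, aF}, ∅, ∅⟩ : Rule α)))
    (R R₁ : Set (Rule α)) (hRR₁ : R ⊆ R₁) (hR₁ : R₁ ⊆ fact '' A)
    (hinc : ¬ coherent (Q ∪ R)) :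
    ¬ coherent (Q ∪ R₁) :=
  stmt_2_general Q A (fun a ha => (hchoice a ha).imp fun _ h => ⟨h.1, h.2.1⟩) R R₁ hRR₁ hR₁ hinc
end

section
/- Let Π be a ground program and I an answer set of Π. Then every atom a ∈ I is supported with respect to I, i.e., there exists a rule r ∈ Π such that a ∈ H(r), B⁺(r) ⊆ I, B⁻(r) ∩ I = ∅, and I ∩ (H(r) \ {a}) = ∅. -/
/-- The rule `r` externally supports the set of atoms `U` in the interpretation `I`: it is a reason
for an atom of `U` to be true that relies on no atom of `U` and that no true head atom outside `U`
discharges. A set of atoms without such a rule is an unfounded set for `I`; the case `U = {a}`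
strengthens the usual notion of support of the atom `a` by `a ∉ B⁺(r)`. -/
structure ExternallySupports {α : Type*} (r : Rule α) (I U : Set α) : Prop where
  exists_head_mem : ∃ a ∈ r.head, a ∈ U
  pos_true : ∀ b ∈ r.pos, b ∈ I \ U
  neg_false : ∀ b ∈ r.neg, b ∉ I
  head_true_mem : ∀ b ∈ r.head, b ∈ I → b ∈ U

section

variable {α : Type*} {Prg : Set (Rule α)} {I U : Set α}

theorem satProg_reduct_iff {J : Set α} :
    satProg J (reduct Prg I) ↔
      ∀ r ∈ Prg, (∀ b ∈ r.neg, b ∉ I) → (∀ b ∈ r.pos, b ∈ J) → ∃ c ∈ r.head, c ∈ J := by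
  constructor
  · intro hJ r hr hneg hpos
    exact hJ ⟨r.head, r.pos, ∅⟩ ⟨r, hr, hneg, rfl⟩ ⟨hpos, by simp⟩
  · rintro h _ ⟨r, hr, hneg, rfl⟩ ⟨hpos, -⟩
    exact h r hr hneg hpos

theorem satProg.exists_externallySupports (hI : satProg I Prg)
    (hU : ¬ satProg (I \ U) (reduct Prg I)) : ∃ r ∈ Prg, ExternallySupports r I U := by
  rw [satProg_reduct_iff] at hU
  push Not at hU
  obtain ⟨r, hr, hneg, hpos, hhead⟩ := hU
  have head_true_mem : ∀ b ∈ r.head, b ∈ I → b ∈ U := fun b hb hbI =>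
    by_contra fun hbU => hhead b hb ⟨hbI, hbU⟩
  obtain ⟨c, hc, hcI⟩ := hI r hr ⟨fun b hb => (hpos b hb).1, hneg⟩
  exact ⟨r, hr, ⟨c, hc, head_true_mem c hc hcI⟩, hpos, hneg, head_true_mem⟩

theorem isAnswerSet.exists_externallySupports (hI : isAnswerSet Prg I) (hU : (I ∩ U).Nonempty) :
    ∃ r ∈ Prg, ExternallySupports r I U :=
  hI.1.exists_externallySupports (hI.2 _ (Set.sdiff_ssubset_left_iff.mpr hU))

end

theorem stmt_7 {α : Type*}
    (Prg : Set (Rule α)) (I : Set α) (hI : isAnswerSet Prg I)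
    (a : α) (ha : a ∈ I) :
    ∃ r ∈ Prg, a ∈ r.head ∧ (∀ b ∈ r.pos, b ∈ I) ∧ (∀ b ∈ r.neg, b ∉ I) ∧
      ∀ b ∈ r.head, b ≠ a → b ∉ I := by
  obtain ⟨r, hr, hsupp⟩ := hI.exists_externallySupports (U := {a}) ⟨a, ha, rfl⟩
  obtain ⟨_, hhead, rfl⟩ := hsupp.exists_head_mem
  exact ⟨r, hr, hhead, fun b hb => (hsupp.pos_true b hb).1, hsupp.neg_false,
    fun b hb hba hbI => hba (hsupp.head_true_mem b hb hbI)⟩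
end
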